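/- Let $c \in [-2,2]$ and let $V$ be a random variable on $[-1,1]$ with density $\tfrac12(1 + \tfrac{c}{2}v)$ with respect to Lebesgue measure on $[-1,1]$. Then for all $t \in \mathbb{R}$, $\mathbb{E}\, e^{tV} \le \exp(ct/6 + t^2/6)$. -/

import Mathlib

open MeasureTheory

/-!
The density `3/4 * (1 - v ^ 2)` on `[-1, 1]` has moment generating function `φ` with
`t φ'' + 4 φ' = t φ`, and integration by parts gives `𝔼 e^{tV} = φ + t φ' / 3 + (c t / 6) φ`.
The tangent-line bound `φ (1 + y - log φ) ≤ e ^ y` at `y = c t / 6 + t ^ 2 / 6` absorbs the term in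
`c` exactly, so it remains to see that `t ^ 2 / 6 - log φ - t φ' / (3 φ)` is nonnegative. It
vanishes at `t = 0` and, by the differential equation, its derivative is `t (φ' / φ) ^ 2 / 3`, which
has the sign of `t`.
-/

lemma mul_one_add_sub_log_le_exp {x : ℝ} (hx : 0 < x) (y : ℝ) :
    x * (1 + y - Real.log x) ≤ Real.exp y := by
  calc x * (1 + y - Real.log x) ≤ x * Real.exp (y - Real.log x) := by
        gcongr
        linarith [Real.add_one_le_exp (y - Real.log x)]
    _ = Real.exp y := by rw [Real.exp_sub, Real.exp_log hx, mul_div_cancel₀ _ hx.ne']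

section ExponentialIntegrals

variable {a b : ℝ} {p p' : ℝ → ℝ}

lemma hasDerivAt_integral_mul_exp (hp : IntervalIntegrable p volume a b) (t : ℝ) :
    HasDerivAt (fun s ↦ ∫ v in a..b, p v * Real.exp (s * v))
      (∫ v in a..b, v * p v * Real.exp (t * v)) t := by
  have integrable_mul {q : ℝ → ℝ} (hq : Continuous q) :
      IntervalIntegrable (fun v ↦ p v * q v) volume a b :=
    hp.mul_continuousOn hq.continuousOn
  have integrable_deriv : IntervalIntegrable (fun v ↦ v * p v * Real.exp (t * v)) volume a b :=
    (integrable_mul (q := fun v ↦ v * Real.exp (t * v)) (by fun_prop)).congr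
      fun v _ ↦ by ring
  have integrable_bound :
      IntervalIntegrable (fun v ↦ ‖p v * (v * Real.exp ((|t| + 1) * |v|))‖) volume a b :=
    (integrable_mul (by fun_prop)).norm
  have deriv_le_bound (v s : ℝ) (hs : s ∈ Metric.ball t 1) :
      ‖v * p v * Real.exp (s * v)‖ ≤ ‖p v * (v * Real.exp ((|t| + 1) * |v|))‖ := by
    have abs_le : |s| ≤ |t| + 1 := by
      have := abs_sub_abs_le_abs_sub s t
      rw [Metric.mem_ball, Real.dist_eq] at hs
      linarith
    have exponent_le : s * v ≤ (|t| + 1) * |v| :=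
      (le_abs_self _).trans (by rw [abs_mul]; gcongr)
    calc ‖v * p v * Real.exp (s * v)‖ = |p v| * (|v| * Real.exp (s * v)) := by
          rw [Real.norm_eq_abs, abs_mul, abs_mul, Real.abs_exp]; ring
      _ ≤ |p v| * (|v| * Real.exp ((|t| + 1) * |v|)) := by gcongr
      _ = ‖p v * (v * Real.exp ((|t| + 1) * |v|))‖ := by
          rw [Real.norm_eq_abs, abs_mul, abs_mul, Real.abs_exp]
  refine (intervalIntegral.hasDerivAt_integral_of_dominated_loc_of_deriv_le
    (F' := fun s v ↦ v * p v * Real.exp (s * v)) (Metric.ball_mem_nhds t one_pos)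
    (.of_forall fun s ↦ (integrable_mul (by fun_prop)).def'.aestronglyMeasurable)
    (integrable_mul (by fun_prop)) integrable_deriv.def'.aestronglyMeasurable
    (.of_forall fun v _ ↦ deriv_le_bound v) integrable_bound
    (.of_forall fun v _ s _ ↦ ?_)).2
  exact (((hasDerivAt_id s).mul_const v).exp.const_mul (p v)).congr_deriv (by simp only [id]; ring)

lemma integral_deriv_add_mul_mul_exp_eq_zero (hp : ∀ v, HasDerivAt p (p' v) v)
    (hp' : Continuous p') (ha : p a = 0) (hb : p b = 0) (t : ℝ) :
    ∫ v in a..b, (p' v + t * p v) * Real.exp (t * v) = 0 := by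
  have continuous_p : Continuous p :=
    continuous_iff_continuousAt.2 fun v ↦ (hp v).continuousAt
  have hasDerivAt_mul_exp (v : ℝ) : HasDerivAt (fun v ↦ p v * Real.exp (t * v))
      ((p' v + t * p v) * Real.exp (t * v)) v :=
    ((hp v).mul ((hasDerivAt_id v).const_mul t).exp).congr_deriv (by simp only [id]; ring)
  rw [intervalIntegral.integral_eq_sub_of_hasDerivAt (fun v _ ↦ hasDerivAt_mul_exp v)
    (Continuous.intervalIntegrable (by fun_prop) _ _), ha, hb]
  ring

end ExponentialIntegrals

/-- The `n`-th derivative of the moment generating function of the probability density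
`3/4 * (1 - v ^ 2)` on `[-1, 1]`, as the exponentially tilted moment
`∫ v ^ n e^{tv} 3/4 (1 - v ^ 2) dv`; for `n = 0` it is the moment generating function itself. -/
noncomputable def parabolicMoment (n : ℕ) (t : ℝ) : ℝ :=
  ∫ v in (-1 : ℝ)..1, v ^ n * (3 / 4 * (1 - v ^ 2)) * Real.exp (t * v)

lemma hasDerivAt_parabolicMoment (n : ℕ) (t : ℝ) :
    HasDerivAt (parabolicMoment n) (parabolicMoment (n + 1) t) t := by
  refine (hasDerivAt_integral_mul_exp
    (Continuous.intervalIntegrable (by fun_prop) _ _) t).congr_deriv ?_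
  simp only [parabolicMoment, pow_succ', mul_assoc]

lemma parabolicMoment_zero_pos (t : ℝ) : 0 < parabolicMoment 0 t := by
  refine intervalIntegral.intervalIntegral_pos_of_pos_on
    (Continuous.intervalIntegrable (by fun_prop) _ _) (fun v hv ↦ ?_) (by norm_num)
  have : 0 < 1 - v ^ 2 := by nlinarith [hv.1, hv.2]
  positivity

lemma parabolicMoment_zero_zero : parabolicMoment 0 0 = 1 := by
  norm_num [parabolicMoment]

lemma parabolicMoment_differential_equation (t : ℝ) :
    t * parabolicMoment 2 t + 4 * parabolicMoment 1 t = t * parabolicMoment 0 t := by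
  have hasDerivAt_boundary (v : ℝ) : HasDerivAt (fun v ↦ -(3 / 4) * (1 - v ^ 2) ^ 2)
      (3 * v * (1 - v ^ 2)) v :=
    ((((hasDerivAt_pow 2 v).const_sub 1).pow 2).const_mul _).congr_deriv (by norm_num; ring)
  rw [← sub_eq_zero, ← integral_deriv_add_mul_mul_exp_eq_zero (a := -1) (b := 1)
    hasDerivAt_boundary (by fun_prop) (by norm_num) (by norm_num) t]
  simp only [parabolicMoment, ← intervalIntegral.integral_const_mul]
  rw [← intervalIntegral.integral_add, ← intervalIntegral.integral_sub]
  · exact intervalIntegral.integral_congr fun v _ ↦ by ring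
  all_goals exact Continuous.intervalIntegrable (by fun_prop) _ _

lemma integral_exp_mul_affine_eq_parabolicMoment (c t : ℝ) :
    ∫ v in (-1 : ℝ)..1, Real.exp (t * v) * ((1 + c / 2 * v) / 2) =
      parabolicMoment 0 t + t / 3 * parabolicMoment 1 t + c * t / 6 * parabolicMoment 0 t := by
  have hasDerivAt_boundary (v : ℝ) : HasDerivAt (fun v ↦ (1 - v ^ 2) * (v / 4 + c / 8))
      ((1 - 3 * v ^ 2) / 4 - c * v / 4) v :=
    (((hasDerivAt_pow 2 v).const_sub 1).mul
      (((hasDerivAt_id v).div_const 4).add_const (c / 8))).congr_deriv (by norm_num; ring)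
  rw [← add_zero (∫ v in (-1 : ℝ)..1, Real.exp (t * v) * ((1 + c / 2 * v) / 2)),
    ← integral_deriv_add_mul_mul_exp_eq_zero (a := -1) (b := 1)
      hasDerivAt_boundary (by fun_prop) (by norm_num) (by norm_num) t]
  simp only [parabolicMoment, ← intervalIntegral.integral_const_mul]
  rw [← intervalIntegral.integral_add, ← intervalIntegral.integral_add,
    ← intervalIntegral.integral_add]
  · exact intervalIntegral.integral_congr fun v _ ↦ by ring
  all_goals exact Continuous.intervalIntegrable (by fun_prop) _ _

/-- With `φ = parabolicMoment 0`, the function `t ^ 2 / 6 - log φ - t φ' / (3 φ)`, whose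
nonnegativity says that the tangent-line bound for the exponential at `log φ` is strong enough. -/
noncomputable def tangentGap (t : ℝ) : ℝ :=
  t ^ 2 / 6 - Real.log (parabolicMoment 0 t)
    - t / 3 * (parabolicMoment 1 t / parabolicMoment 0 t)

lemma hasDerivAt_tangentGap (t : ℝ) :
    HasDerivAt tangentGap (t / 3 * (parabolicMoment 1 t / parabolicMoment 0 t) ^ 2) t := by
  have mgf_ne_zero := (parabolicMoment_zero_pos t).ne'
  have hasDerivAt_mgf := hasDerivAt_parabolicMoment 0 t
  have hasDerivAt_ratio := (hasDerivAt_parabolicMoment 1 t).div hasDerivAt_mgf mgf_ne_zero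
  refine ((((hasDerivAt_pow 2 t).div_const 6).sub (hasDerivAt_mgf.log mgf_ne_zero)).sub
    (((hasDerivAt_id t).div_const 3).mul hasDerivAt_ratio)).congr_deriv ?_
  simp only [id, Pi.div_apply, zero_add, one_add_one_eq_two]
  field_simp
  linear_combination -6 * parabolicMoment 0 t * parabolicMoment_differential_equation t

lemma tangentGap_nonneg (t : ℝ) : 0 ≤ tangentGap t := by
  have differentiable : Differentiable ℝ tangentGap :=
    fun s ↦ (hasDerivAt_tangentGap s).differentiableAt
  have isMinOn_zero : IsMinOn tangentGap Set.univ 0 := by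
    refine isMinOn_univ_of_deriv differentiable.continuous.continuousAt
      differentiable.differentiableOn differentiable.differentiableOn
      (fun s hs ↦ ?_) (fun s hs ↦ ?_) <;> rw [(hasDerivAt_tangentGap s).deriv]
    · exact mul_nonpos_of_nonpos_of_nonneg (by linarith [Set.mem_Iio.1 hs]) (sq_nonneg _)
    · exact mul_nonneg (by linarith [Set.mem_Ioi.1 hs]) (sq_nonneg _)
  calc 0 = tangentGap 0 := by simp [tangentGap, parabolicMoment_zero_zero]
    _ ≤ tangentGap t := isMinOn_zero (Set.mem_univ t)

theorem mgf_bound_general (c t : ℝ) :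
    (∫ v in (-1 : ℝ)..1, Real.exp (t * v) * ((1 + c / 2 * v) / 2)) ≤
      Real.exp (c * t / 6 + t ^ 2 / 6) := by
  set φ := parabolicMoment 0 t with φ_def
  have φ_pos : 0 < φ := parabolicMoment_zero_pos t
  calc ∫ v in (-1 : ℝ)..1, Real.exp (t * v) * ((1 + c / 2 * v) / 2)
      = φ + t / 3 * parabolicMoment 1 t + c * t / 6 * φ :=
        integral_exp_mul_affine_eq_parabolicMoment c t
    _ = φ * (1 + (c * t / 6 + t ^ 2 / 6) - Real.log φ) - φ * tangentGap t := by
        rw [tangentGap, ← φ_def]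
        field_simp
        ring
    _ ≤ φ * (1 + (c * t / 6 + t ^ 2 / 6) - Real.log φ) :=
        sub_le_self _ (mul_nonneg φ_pos.le (tangentGap_nonneg t))
    _ ≤ Real.exp (c * t / 6 + t ^ 2 / 6) := mul_one_add_sub_log_le_exp φ_pos _

/-- For `c ∈ [-2,2]` and `V` with density `(1 + (c/2)v)/2` on `[-1,1]`,
`E e^{tV} ≤ exp(ct/6 + t²/6)` for all `t`. -/
theorem mgf_bound (c : ℝ) (hc : c ∈ Set.Icc (-2 : ℝ) 2) (t : ℝ) :
    (∫ v in (-1 : ℝ)..1, Real.exp (t * v) * ((1 + c / 2 * v) / 2)) ≤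
      Real.exp (c * t / 6 + t ^ 2 / 6) :=
  mgf_bound_general c t
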